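/- Let K ⊆ ℝ^d be an isotropic simplicial polytope with unique irredundant H-representation K = ∩_{i=1}^m H_i (each H_i a closed halfspace). Fix a facet index i′ and let P = ∩_{i ≠ i′} H_i be the polyhedron obtained by relaxing H_{i′}. Let v_1, …, v_d be the vertices of facet i′ and fix j′ ∈ {1,…,d}. Let Z be the affine hull of { v_j : j ≠ j′ }, and introduce cylindrical coordinates (ρ, θ, z) with origin an arbitrary point of Z ∩ K: ρ ∈ [0,∞) and θ ∈ [−π, π) are polar coordinates in the 2-dimensional plane orthogonal to Z, z ranges over Z, and θ is oriented so that points of facet i′ have θ = 0 and all of K has θ ∈ (−π, 0]. Let K_t = { x ∈ P : θ(x) ∈ [−π, t] } and S_0 = P ∩ { x : θ(x) = 0 }. Let D be the probability distribution on S_0 with density proportional to ρ(x). Then d/dt L_{K_t}^{2d} |_{t=0} = ( E_{X ∼ D}[‖X‖²] − d − 2 ) · ( d/dt vol(K_t) |_{t=0} ) / (vol K)³. -/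

import Mathlib

open MeasureTheory Finset
open scoped ProbabilityTheory
open scoped RealInnerProductSpace

noncomputable section

abbrev Euc (d : ℕ) := EuclideanSpace ℝ (Fin d)

section GeneralSpace

variable {V : Type*} [NormedAddCommGroup V] [NormedSpace ℝ V]

/-- The dimension of a set: the rank of the direction of its affine span. -/
noncomputable def sdim (F : Set V) : ℕ := Module.finrank ℝ (affineSpan ℝ F).direction

/-- `F` is a simplex with `n` vertices (an `(n-1)`-dimensional simplex). -/
def IsSimplexWith (n : ℕ) (F : Set V) : Prop :=
  ∃ w : Fin n → V, AffineIndependent ℝ w ∧ F = convexHull ℝ (Set.range w)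

/-- A polytope is the convex hull of finitely many points. -/
def IsPolytope (P : Set V) : Prop := ∃ S : Finset V, P = convexHull ℝ (S : Set V)

/-- A facet of a `d`-dimensional polytope: an exposed face of dimension `d - 1`. -/
def IsFacetOf (d : ℕ) (P F : Set V) : Prop := IsExposed ℝ P F ∧ sdim F = d - 1

/-- A `d`-dimensional simplicial polytope: a polytope of dimension `d`, each facet of which
is a `(d-1)`-dimensional simplex (i.e. has `d` affinely independent vertices). -/
def IsSimplicialPolytope (d : ℕ) (P : Set V) : Prop :=
  IsPolytope P ∧ sdim P = d ∧ ∀ F : Set V, IsFacetOf d P F → IsSimplexWith d F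

end GeneralSpace

/-- A convex body: compact, convex, with nonempty interior. -/
def IsConvexBody {d : ℕ} (K : Set (Euc d)) : Prop :=
  IsCompact K ∧ Convex ℝ K ∧ (interior K).Nonempty

/-- The barycenter `μ_K` of the uniform distribution on `K`. -/
noncomputable def centroid {d : ℕ} (K : Set (Euc d)) : Euc d :=
  (volume K).toReal⁻¹ • ∫ x in K, x

/-- The covariance matrix `A(K)` of the uniform distribution on `K`. -/
noncomputable def covMatrix {d : ℕ} (K : Set (Euc d)) : Matrix (Fin d) (Fin d) ℝ :=
  Matrix.of fun i j =>
    (volume K).toReal⁻¹ * ∫ x in K, (x i - centroid K i) * (x j - centroid K j)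

/-- The isotropic constant `L_K`, defined by `L_K ^ (2d) = det A(K) / vol(K) ^ 2`. -/
noncomputable def isoConst {d : ℕ} (K : Set (Euc d)) : ℝ :=
  ((covMatrix K).det / (volume K).toReal ^ 2) ^ ((2 * (d : ℝ))⁻¹)

/-- `K` is isotropic: its barycenter is the origin and its covariance matrix is the identity. -/
def IsIsotropic {d : ℕ} (K : Set (Euc d)) : Prop :=
  centroid K = 0 ∧ covMatrix K = 1

/-- `P` is a local extremum (local maximum or local minimum) of `K ↦ L_K` among convex bodies,
with respect to the Hausdorff metric. -/
def IsLocalExtremumOfIsoConst {d : ℕ} (P : Set (Euc d)) : Prop :=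
  (∃ ε > 0, ∀ K : Set (Euc d), IsConvexBody K →
      Metric.hausdorffDist K P < ε → isoConst K ≤ isoConst P) ∨
  (∃ ε > 0, ∀ K : Set (Euc d), IsConvexBody K →
      Metric.hausdorffDist K P < ε → isoConst P ≤ isoConst K)

/-- The polar angle of `(a, b) ∈ ℝ²`, normalized to lie in `[-π, π)`. -/
noncomputable def polarAngle (a b : ℝ) : ℝ :=
  if Complex.arg ⟨a, b⟩ = Real.pi then -Real.pi else Complex.arg ⟨a, b⟩

/-!
In cylindrical coordinates `∫ x in K_t, f x` is the integral over `θ ∈ (-π, t)` of the integrals of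
`f` over the slices of `P` by half-hyperplanes through the axis, with weight `ρ`. By the fundamental
theorem of calculus its derivative at `t = 0` is the integral of `ρ f` over `S₀`, once the slice
integral is known to be continuous at `θ = 0`. Off the boundary of the convex slice `S₀`, which is
a null set, membership in `P` is locally constant in `θ`, so dominated convergence applies. The
bound comes from `K_δ` being bounded for small `δ > 0`: as `K` is bounded, the points of `P` far
from the origin have `θ` bounded away from `0`.

Write `D f` for this derivative and `V = D 1`. At an isotropic body the mean is zero, so only the
second moments contribute to the first variation of the covariance, which is
`(D (xᵢ xⱼ) - δᵢⱼ V) / vol K`. The derivative of `det` at the identity is the trace, giving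
`(D ‖x‖² - d V) / vol K`, and the factor `vol⁻²` contributes the remaining `-2 V`. Finally
`D ‖x‖² = E[‖X‖²] V`, the expectation being over the density proportional to `ρ` on `S₀`.
-/

open Metric Filter
open scoped Topology

section PolarAngle

variable {a b : ℝ}

lemma neg_pi_le_polarAngle (a b : ℝ) : -Real.pi ≤ polarAngle a b := by
  unfold polarAngle
  split_ifs
  · exact le_rfl
  · exact (Complex.neg_pi_lt_arg _).le

lemma sin_polarAngle (a b : ℝ) : Real.sin (polarAngle a b) = Real.sin (Complex.arg ⟨a, b⟩) := by
  unfold polarAngle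
  split_ifs with h
  · simp [h]
  · rfl

lemma sqrt_mul_sin_polarAngle (a b : ℝ) :
    √(a ^ 2 + b ^ 2) * Real.sin (polarAngle a b) = b := by
  rw [sin_polarAngle, ← Complex.norm_eq_sqrt_sq_add_sq ⟨a, b⟩]
  exact Complex.norm_mul_sin_arg ⟨a, b⟩

lemma polarAngle_mul_cos_mul_sin {r θ : ℝ} (hr : 0 < r) (hθ : θ ∈ Set.Ioo (-Real.pi) Real.pi) :
    polarAngle (r * Real.cos θ) (r * Real.sin θ) = θ := by
  have harg := Complex.arg_mul_cos_add_sin_mul_I hr ⟨hθ.1, hθ.2.le⟩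
  have hpoint : (r * (Complex.cos θ + Complex.sin θ * Complex.I) : ℂ) =
      ⟨r * Real.cos θ, r * Real.sin θ⟩ := by
    apply Complex.ext <;> simp [← Complex.ofReal_cos, ← Complex.ofReal_sin]
  rw [hpoint] at harg
  rw [polarAngle, harg, if_neg hθ.2.ne]

lemma polarAngle_neg_iff : polarAngle a b < 0 ↔ b < 0 ∨ a < 0 ∧ b = 0 := by
  unfold polarAngle
  split_ifs with h
  · simp [Real.pi_pos, (Complex.arg_eq_pi_iff.1 h).1, show b = 0 from (Complex.arg_eq_pi_iff.1 h).2]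
  · rw [Complex.arg_neg_iff]
    exact ⟨Or.inl, fun h' => h'.resolve_right fun hab => h (Complex.arg_eq_pi_iff.2 hab)⟩

lemma polarAngle_eq_zero_iff : polarAngle a b = 0 ↔ 0 ≤ a ∧ b = 0 := by
  unfold polarAngle
  split_ifs with h
  · simp [Real.pi_pos.ne', (Complex.arg_eq_pi_iff.1 h).1.not_ge]
  · exact Complex.arg_eq_zero_iff

lemma polarAngle_nonpos_iff : polarAngle a b ≤ 0 ↔ b ≤ 0 := by
  rw [le_iff_lt_or_eq, polarAngle_neg_iff, polarAngle_eq_zero_iff, or_assoc, ← or_and_right,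
    and_iff_right (lt_or_ge a 0), le_iff_lt_or_eq]

lemma polarAngle_eq_zero_of_neg_pi_lt (hab : -Real.pi < polarAngle a b) (hb : b = 0) :
    polarAngle a b = 0 := by
  refine polarAngle_eq_zero_iff.2 ⟨?_, hb⟩
  by_contra! ha
  have harg : Complex.arg ⟨a, b⟩ = Real.pi := Complex.arg_eq_pi_iff.2 ⟨ha, hb⟩
  simp [polarAngle, harg] at hab

lemma measurable_polarAngle : Measurable fun p : ℝ × ℝ => polarAngle p.1 p.2 := by
  have harg : Measurable fun p : ℝ × ℝ => Complex.arg ⟨p.1, p.2⟩ :=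
    Complex.measurable_arg.comp Complex.measurableEquivRealProd.symm.measurable
  exact Measurable.ite (harg (measurableSet_singleton _)) measurable_const harg

end PolarAngle

section HalfSpace

variable {E : Type*} [NormedAddCommGroup E] [InnerProductSpace ℝ E]

lemma inner_lt_of_mem_interior {a p : E} {c : ℝ} {S : Set E} (ha : a ≠ 0)
    (hS : S ⊆ {x | ⟪a, x⟫ ≤ c}) (hp : p ∈ interior S) : ⟪a, p⟫ < c := by
  have hopen : IsOpenMap (innerSL ℝ a) :=
    (innerSL ℝ a).isOpenMap_of_ne_zero fun h => ha (by simpa using congr($h a))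
  have himage : innerSL ℝ a '' interior S ⊆ Set.Iio c := by
    rw [← interior_Iic]
    exact interior_maximal (Set.image_subset_iff.2 (interior_subset.trans hS))
      (hopen _ isOpen_interior)
  exact himage ⟨p, hp, rfl⟩

lemma mem_orthogonal_vectorSpan_of_inner_eq {ι : Type*} {v : ι → E} {a : E} {c : ℝ}
    (ha : ∀ i, ⟪a, v i⟫ = c) : a ∈ (vectorSpan ℝ (Set.range v))ᗮ := by
  have hle : vectorSpan ℝ (Set.range v) ≤ (ℝ ∙ a)ᗮ := by
    rw [vectorSpan_def, Submodule.span_le]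
    rintro _ ⟨_, ⟨i, rfl⟩, _, ⟨j, rfl⟩, rfl⟩
    exact Submodule.mem_orthogonal_singleton_iff_inner_right.2 (by simp [inner_sub_right, ha])
  exact fun y hy => Submodule.mem_orthogonal_singleton_iff_inner_left.1 (hle hy)

lemma isClosed_biInter_halfSpace {ι : Type*} (s : Set ι) (a : ι → E) (c : ι → ℝ) :
    IsClosed (⋂ i ∈ s, {x | ⟪a i, x⟫ ≤ c i}) :=
  isClosed_biInter fun _ _ => isClosed_le (by fun_prop) continuous_const

lemma convex_biInter_halfSpace {ι : Type*} (s : Set ι) (a : ι → E) (c : ι → ℝ) :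
    Convex ℝ (⋂ i ∈ s, {x | ⟪a i, x⟫ ≤ c i}) :=
  convex_iInter₂ fun i _ => convex_halfSpace_le (innerSL ℝ (a i)).isLinear (c i)

variable {ι : Type*} [Fintype ι] [Nonempty ι] [FiniteDimensional ℝ E]

lemma finrank_orthogonal_vectorSpan {v : ι → E} (hv : AffineIndependent ℝ v)
    (hcard : Fintype.card ι = Module.finrank ℝ E) :
    Module.finrank ℝ (vectorSpan ℝ (Set.range v))ᗮ = 1 := by
  have hspan := hv.finrank_vectorSpan_add_one
  have horth := (vectorSpan ℝ (Set.range v)).finrank_add_finrank_orthogonal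
  omega

lemma setOf_inner_le_eq_of_affineIndependent {v : ι → E} (hv : AffineIndependent ℝ v)
    (hcard : Fintype.card ι = Module.finrank ℝ E) {a w p : E} {b c : ℝ}
    (hav : ∀ i, ⟪a, v i⟫ = c) (hwv : ∀ i, ⟪w, v i⟫ = b) (hap : ⟪a, p⟫ < c) (hwp : ⟪w, p⟫ < b) :
    {x | ⟪a, x⟫ ≤ c} = {x | ⟪w, x⟫ ≤ b} := by
  obtain ⟨i⟩ := ‹Nonempty ι›
  have hw : w ≠ 0 := by
    rintro rfl
    simp [← hwv i] at hwp
  obtain ⟨l, hl⟩ := (finrank_eq_one_iff_of_nonzero'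
    (⟨w, mem_orthogonal_vectorSpan_of_inner_eq hwv⟩ : (vectorSpan ℝ (Set.range v))ᗮ)
    (by simpa using hw)).1 (finrank_orthogonal_vectorSpan hv hcard)
    ⟨a, mem_orthogonal_vectorSpan_of_inner_eq hav⟩
  obtain rfl : l • w = a := congrArg Subtype.val hl
  have hc : c = l * b := by rw [← hav i, real_inner_smul_left, hwv i]
  have hlpos : 0 < l := by
    rw [real_inner_smul_left, hc] at hap
    exact pos_of_mul_pos_left (by linarith : 0 < l * (b - ⟪w, p⟫)) (sub_nonneg.2 hwp.le)
  ext x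
  simp [real_inner_smul_left, hc, hlpos]

end HalfSpace

lemma biInter_univ_erase_inter {α ι : Type*} [Fintype ι] [DecidableEq ι] (s : ι → Set α) (i : ι) :
    (⋂ j ∈ univ.erase i, s j) ∩ s i = ⋂ j, s j := by
  rw [Set.inter_comm, ← set_biInter_insert, insert_erase (mem_univ i)]
  simp only [mem_univ, Set.iInter_true]

section MatrixDet

variable {n : Type*} [Fintype n] [DecidableEq n]

lemma hasDerivAt_det {A : ℝ → Matrix n n ℝ} {A' : Matrix n n ℝ} {t : ℝ}
    (hA : ∀ i j, HasDerivAt (fun s => A s i j) (A' i j) t) :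
    HasDerivAt (fun s => (A s).det) (A' * (A t).adjugate).trace t := by
  let det : ContinuousMultilinearMap ℝ (fun _ : n => n → ℝ) ℝ :=
    ⟨Matrix.detRowAlternating.toMultilinearMap, continuous_id.matrix_det⟩
  have hA' : HasDerivAt (fun s i => A s i) (fun i => A' i) t :=
    hasDerivAt_pi.2 fun i => hasDerivAt_pi.2 (hA i)
  refine ((det.hasFDerivAt _).comp_hasDerivAt t hA').congr_deriv ?_
  rw [ContinuousMultilinearMap.linearDeriv_apply, Matrix.trace]
  refine Finset.sum_congr rfl fun i _ => ?_
  calc ((A t).updateRow i (A' i)).det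
      = ((A t).adjugate.transpose.mulVec (A' i)) i := by
        rw [← Matrix.cramer_transpose_apply, Matrix.cramer_eq_adjugate_mulVec,
          Matrix.adjugate_transpose]
    _ = (A' * (A t).adjugate).diag i := by
        simp [Matrix.mulVec_transpose, Matrix.vecMul, Matrix.mul_apply, dotProduct]

end MatrixDet

lemma integrableOn_of_isBounded {E G : Type*} [MetricSpace E] [ProperSpace E]
    [MeasurableSpace E] [OpensMeasurableSpace E] {μ : Measure E} [IsLocallyFiniteMeasure μ]
    [NormedAddCommGroup G] {S : Set E} (hS : Bornology.IsBounded S) {f : E → G}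
    (hf : Continuous f) : IntegrableOn f S μ :=
  (hf.continuousOn.integrableOn_compact hS.isCompact_closure).mono_set subset_closure

section FirstVariation

lemma hasDerivAt_setAverage {α : Type*} [MeasurableSpace α] {μ : Measure α} {S : ℝ → Set α}
    {t₀ V I : ℝ} {f : α → ℝ} (hS : μ.real (S t₀) ≠ 0)
    (hV : HasDerivAt (fun t => μ.real (S t)) V t₀)
    (hI : HasDerivAt (fun t => ∫ x in S t, f x ∂μ) I t₀) :
    HasDerivAt (fun t => ⨍ x in S t, f x ∂μ)
      ((I - (⨍ x in S t₀, f x ∂μ) * V) / μ.real (S t₀)) t₀ := by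
  simp only [setAverage_eq, smul_eq_mul, inv_mul_eq_div]
  refine (hI.div hV hS).congr_deriv ?_
  field_simp

variable {d : ℕ}

lemma centroid_apply {S : Set (Euc d)} (hS : Bornology.IsBounded S) (i : Fin d) :
    _root_.centroid S i = ⨍ x in S, x i := by
  have hproj := (EuclideanSpace.proj (𝕜 := ℝ) i).integral_comp_comm
    (integrableOn_of_isBounded (μ := volume) hS continuous_id)
  rw [setAverage_eq, Measure.real, _root_.centroid, PiLp.smul_apply]
  exact congrArg _ hproj.symm

lemma covMatrix_apply {S : Set (Euc d)} (hS : Bornology.IsBounded S) (hvol : volume.real S ≠ 0)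
    (i j : Fin d) :
    covMatrix S i j = (⨍ x in S, x i * x j) - (⨍ x in S, x i) * ⨍ x in S, x j := by
  have hvol₀ : volume S ≠ 0 := fun h => hvol (by simp [Measure.real, h])
  have hprob : IsProbabilityMeasure (volume[|S]) :=
    ProbabilityTheory.cond_isProbabilityMeasure_of_finite hvol₀ hS.measure_lt_top.ne
  have hmem (k : Fin d) : MemLp (fun x : Euc d => x k) 2 (volume[|S]) := by
    have hsq : IntegrableOn (fun x : Euc d => x k ^ 2) S :=
      integrableOn_of_isBounded hS (by fun_prop)
    exact (memLp_two_iff_integrable_sq (by fun_prop)).2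
      (hsq.integrable.smul_measure (ENNReal.inv_ne_top.2 hvol₀))
  have hcov := ProbabilityTheory.covariance_eq_sub (hmem i) (hmem j)
  simp only [ProbabilityTheory.cond, ← setAverage_eq', ProbabilityTheory.covariance] at hcov
  rw [covMatrix, Matrix.of_apply, centroid_apply hS, centroid_apply hS]
  simpa [setAverage_eq, Measure.real] using hcov

lemma IsIsotropic.setAverage_apply {S : Set (Euc d)} (hiso : IsIsotropic S)
    (hS : Bornology.IsBounded S) (i : Fin d) : ⨍ x in S, x i = 0 := by
  rw [← centroid_apply hS, hiso.1, PiLp.zero_apply]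

lemma IsIsotropic.setAverage_mul {S : Set (Euc d)} (hiso : IsIsotropic S)
    (hS : Bornology.IsBounded S) (hvol : volume.real S ≠ 0) (i j : Fin d) :
    ⨍ x in S, x i * x j = (1 : Matrix (Fin d) (Fin d) ℝ) i j := by
  rw [← hiso.2, covMatrix_apply hS hvol, hiso.setAverage_apply hS, zero_mul, sub_zero]

lemma IsIsotropic.volume_real_ne_zero {S : Set (Euc d)} (hiso : IsIsotropic S)
    (i : Fin d) : volume.real S ≠ 0 := by
  intro hvol
  have hentry := congr($(hiso.2) i i)
  rw [covMatrix, Matrix.of_apply, ← measureReal_def, hvol] at hentry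
  simp at hentry

/-- `D f` is the first variation at `t₀` of the integrals of continuous functions `f` over the
moving bounded sets `S t`. -/
structure HasFirstVariation (S : ℝ → Set (Euc d)) (D : (Euc d → ℝ) → ℝ) (t₀ : ℝ) : Prop where
  eventually_isBounded : ∀ᶠ t in 𝓝 t₀, Bornology.IsBounded (S t)
  hasDerivAt_setIntegral (f : Euc d → ℝ) :
    Continuous f → HasDerivAt (fun t => ∫ x in S t, f x) (D f) t₀

namespace HasFirstVariation

variable {S : ℝ → Set (Euc d)} {D : (Euc d → ℝ) → ℝ} {t₀ : ℝ}

lemma hasDerivAt_volume (hS : HasFirstVariation S D t₀) :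
    HasDerivAt (fun t => volume.real (S t)) (D fun _ => 1) t₀ := by
  simpa using hS.hasDerivAt_setIntegral (fun _ => 1) continuous_const

lemma sum_mul_self (hS : HasFirstVariation S D t₀) :
    ∑ i, D (fun x => x i * x i) = D fun x => ‖x‖ ^ 2 := by
  refine HasDerivAt.unique (HasDerivAt.fun_sum fun i _ =>
    hS.hasDerivAt_setIntegral (fun x => x i * x i) (by fun_prop)) ?_
  refine (hS.hasDerivAt_setIntegral (fun x => ‖x‖ ^ 2) (by fun_prop)).congr_of_eventuallyEq ?_
  filter_upwards [hS.eventually_isBounded] with t ht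
  rw [← integral_finsetSum _ fun i _ => integrableOn_of_isBounded ht (by fun_prop)]
  exact integral_congr_ae (.of_forall fun x => by simp [EuclideanSpace.real_norm_sq_eq, ← sq])

lemma hasDerivAt_covMatrix_apply (hS : HasFirstVariation S D t₀) (hiso : IsIsotropic (S t₀))
    (hvol : volume.real (S t₀) ≠ 0) (i j : Fin d) :
    HasDerivAt (fun t => covMatrix (S t) i j)
      ((D (fun x => x i * x j) - (1 : Matrix (Fin d) (Fin d) ℝ) i j * D fun _ => 1) /
        volume.real (S t₀)) t₀ := by
  have hbdd := hS.eventually_isBounded.self_of_nhds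
  have hmean (f : Euc d → ℝ) (hf : Continuous f) :=
    hasDerivAt_setAverage hvol hS.hasDerivAt_volume (hS.hasDerivAt_setIntegral f hf)
  have hderiv := (hmean (fun x => x i * x j) (by fun_prop)).fun_sub
    ((hmean (fun x => x i) (by fun_prop)).fun_mul (hmean (fun x => x j) (by fun_prop)))
  rw [hiso.setAverage_mul hbdd hvol, hiso.setAverage_apply hbdd, hiso.setAverage_apply hbdd,
    mul_zero, zero_mul, add_zero, sub_zero] at hderiv
  refine hderiv.congr_of_eventuallyEq ?_
  filter_upwards [hS.eventually_isBounded, hS.hasDerivAt_volume.continuousAt.eventually_ne hvol]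
    with t ht htvol using covMatrix_apply ht htvol i j

lemma hasDerivAt_det_covMatrix (hS : HasFirstVariation S D t₀) (hiso : IsIsotropic (S t₀))
    (hvol : volume.real (S t₀) ≠ 0) :
    HasDerivAt (fun t => (covMatrix (S t)).det)
      ((D (fun x => ‖x‖ ^ 2) - d * D fun _ => 1) / volume.real (S t₀)) t₀ := by
  refine (hasDerivAt_det (A' := Matrix.of fun i j => _)
    (hS.hasDerivAt_covMatrix_apply hiso hvol)).congr_deriv ?_
  rw [hiso.2, Matrix.adjugate_one, mul_one, ← hS.sum_mul_self]
  simp [Matrix.trace, div_eq_mul_inv, ← Finset.sum_mul]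

lemma hasDerivAt_det_covMatrix_div_sq (hS : HasFirstVariation S D t₀) (hiso : IsIsotropic (S t₀))
    (hvol : volume.real (S t₀) ≠ 0) :
    HasDerivAt (fun t => (covMatrix (S t)).det / volume.real (S t) ^ 2)
      ((D (fun x => ‖x‖ ^ 2) - (d + 2) * D fun _ => 1) / volume.real (S t₀) ^ 3) t₀ := by
  refine ((hS.hasDerivAt_det_covMatrix hiso hvol).fun_div (hS.hasDerivAt_volume.fun_pow 2)
    (pow_ne_zero 2 hvol)).congr_deriv ?_
  rw [hiso.2, Matrix.det_one]
  field_simp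
  ring

end HasFirstVariation

end FirstVariation

section OrthogonalCoprod

variable {E F G : Type*} [NormedAddCommGroup E] [InnerProductSpace ℝ E]
  [NormedAddCommGroup F] [InnerProductSpace ℝ F] [NormedAddCommGroup G] [InnerProductSpace ℝ G]

/-- The isometry `(x, y) ↦ f x + g y` on the Euclidean product of `F` and `G`, for isometries
`f` and `g` with orthogonal ranges. -/
def orthogonalCoprod (f : F →ₗᵢ[ℝ] E) (g : G →ₗᵢ[ℝ] E) (hfg : ∀ x y, ⟪f x, g y⟫ = 0) :
    WithLp 2 (F × G) →ₗᵢ[ℝ] E where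
  toLinearMap := f.toLinearMap.coprod g.toLinearMap ∘ₗ (WithLp.linearEquiv 2 ℝ (F × G)).toLinearMap
  norm_map' p := by
    rw [← sq_eq_sq₀ (norm_nonneg _) (norm_nonneg _), WithLp.prod_norm_sq_eq_of_L2]
    simpa [sq] using norm_add_sq_eq_norm_sq_add_norm_sq_of_inner_eq_zero _ _ (hfg p.fst p.snd)

@[simp]
lemma orthogonalCoprod_apply (f : F →ₗᵢ[ℝ] E) (g : G →ₗᵢ[ℝ] E) (hfg : ∀ x y, ⟪f x, g y⟫ = 0)
    (p : WithLp 2 (F × G)) : orthogonalCoprod f g hfg p = f p.fst + g p.snd :=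
  rfl

end OrthogonalCoprod

lemma finrank_withLp_real_prod {V : Type*} [NormedAddCommGroup V] [InnerProductSpace ℝ V]
    [FiniteDimensional ℝ V] :
    Module.finrank ℝ (WithLp 2 (ℝ × V)) = 1 + Module.finrank ℝ V := by
  rw [(WithLp.linearEquiv 2 ℝ (ℝ × V)).finrank_eq, Module.finrank_prod, Module.finrank_self]

section PolarMeasure

/-- The measure `r dr` on the positive half-line, the radial factor of the area in polar
coordinates. -/
def radialMeasure : Measure ℝ := (volume.restrict (Set.Ioi 0)).withDensity ENNReal.ofReal

instance : IsLocallyFiniteMeasure radialMeasure :=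
  IsLocallyFiniteMeasure.withDensity_ofReal continuous_id

instance : SFinite radialMeasure := by
  unfold radialMeasure
  infer_instance

lemma ae_radialMeasure_pos : ∀ᵐ r ∂radialMeasure, 0 < r :=
  (withDensity_absolutelyContinuous _ _).ae_le (ae_restrict_mem measurableSet_Ioi)

lemma measurePreserving_mul_cos_mul_sin :
    MeasurePreserving (fun p : ℝ × ℝ => (p.1 * Real.cos p.2, p.1 * Real.sin p.2))
      (radialMeasure.prod (volume.restrict (Set.Ioo (-Real.pi) Real.pi))) volume where
  measurable := by fun_prop
  map_eq := by
    refine Measure.ext_of_lintegral _ fun f hf => ?_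
    rw [lintegral_map hf (by fun_prop), radialMeasure,
      prod_withDensity_left₀ ENNReal.measurable_ofReal.aemeasurable, Measure.prod_restrict,
      lintegral_withDensity_eq_lintegral_mul₀ (by fun_prop) (by fun_prop),
      ← lintegral_comp_polarCoord_symm]
    rfl

end PolarMeasure

lemma setIntegral_div_setIntegral_hausdorffMeasure {E : Type*} [EMetricSpace E]
    [MeasurableSpace E] [BorelSpace E] (n : ℕ) (S : Set E) (g h : E → ℝ) :
    (∫ x in S, g x ∂μH[n]) / ∫ x in S, h x ∂μH[n] =
      (∫ x in S, g x ∂μHE[n]) / ∫ x in S, h x ∂μHE[n] := by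
  simp only [Measure.euclideanHausdorffMeasure_def, Measure.restrict_smul,
    integral_smul_nnreal_measure, NNReal.smul_def, smul_eq_mul]
  rw [mul_div_mul_left]
  exact_mod_cast Measure.addHaarScalarFactor_volume_hausdorffMeasure_ne_zero n

/-- An axis of codimension two through `origin` with a chosen positively ordered orthonormal pair
`e₁, e₂` of normals: the data fixing cylindrical coordinates, with `θ = 0` along `e₁` and
`θ = π / 2` along `e₂`. -/
structure CylFrame (E : Type*) [NormedAddCommGroup E] [InnerProductSpace ℝ E] where
  origin : E
  e₁ : E
  e₂ : E
  orthonormal : Orthonormal ℝ ![e₁, e₂]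

namespace CylFrame

variable {E : Type*} [NormedAddCommGroup E] [InnerProductSpace ℝ E] (F : CylFrame E)

lemma norm_e₁ : ‖F.e₁‖ = 1 := F.orthonormal.1 0

lemma norm_e₂ : ‖F.e₂‖ = 1 := F.orthonormal.1 1

lemma inner_e₁_e₂ : ⟪F.e₁, F.e₂⟫ = 0 := F.orthonormal.2 (zero_ne_one (α := Fin 2))

lemma inner_e₂_e₁ : ⟪F.e₂, F.e₁⟫ = 0 := F.orthonormal.2 (one_ne_zero (α := Fin 2))

/-- The direction of the axis, i.e. the range of the coordinate `z`. -/
abbrev axis : Submodule ℝ E := (Submodule.span ℝ {F.e₁, F.e₂})ᗮ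

/-- The cylindrical coordinate `θ`. -/
def angle (x : E) : ℝ := polarAngle ⟪x - F.origin, F.e₁⟫ ⟪x - F.origin, F.e₂⟫

/-- The cylindrical coordinate `ρ`, the distance to the axis. -/
def radius (x : E) : ℝ := √(⟪x - F.origin, F.e₁⟫ ^ 2 + ⟪x - F.origin, F.e₂⟫ ^ 2)

/-- The point with cylindrical coordinates `(r, θ, z)`, where `q = (r, z)`. -/
def point (θ : ℝ) (q : ℝ × F.axis) : E :=
  F.origin + (q.1 * Real.cos θ) • F.e₁ + (q.1 * Real.sin θ) • F.e₂ + q.2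

/-- The measure `r dr dz` on the coordinate half-space of pairs `(r, z)`. -/
def coordMeasure [FiniteDimensional ℝ E] [MeasurableSpace E] [BorelSpace E] :
    Measure (ℝ × F.axis) :=
  radialMeasure.prod volume

/-- The set `K_t` obtained from `S` by moving the half-hyperplane `θ = t` about the axis: the part
of `S` where `θ ≤ t`. -/
def hinge (S : Set E) (t : ℝ) : Set E := {x ∈ S | F.angle x ∈ Set.Icc (-Real.pi) t}

lemma mem_axis_iff {z : E} : z ∈ F.axis ↔ ⟪F.e₁, z⟫ = 0 ∧ ⟪F.e₂, z⟫ = 0 := by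
  refine ⟨fun hz => ⟨hz _ (Submodule.subset_span (Set.mem_insert _ _)),
    hz _ (Submodule.subset_span (Set.mem_insert_of_mem _ rfl))⟩, fun hz y hy => ?_⟩
  obtain ⟨a, b, rfl⟩ := Submodule.mem_span_pair.1 hy
  simp [inner_add_left, inner_smul_left, hz]

lemma inner_e₁_axis (z : F.axis) : ⟪F.e₁, (z : E)⟫ = 0 := (F.mem_axis_iff.1 z.2).1

lemma inner_e₂_axis (z : F.axis) : ⟪F.e₂, (z : E)⟫ = 0 := (F.mem_axis_iff.1 z.2).2

/-- The isometric parametrization `(r, z) ↦ r e₁ + z` of the hyperplane directions orthogonal to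
`e₂`. -/
def halfIsometry : WithLp 2 (ℝ × F.axis) →ₗᵢ[ℝ] E :=
  orthogonalCoprod (LinearIsometry.toSpanSingleton ℝ E F.norm_e₁) F.axis.subtypeₗᵢ fun r z => by
    simp [inner_smul_left, F.inner_e₁_axis z]

/-- The Cartesian coordinates `(b, (a, z)) ↦ b e₂ + (a e₁ + z)` of the frame. -/
def isometry : WithLp 2 (ℝ × WithLp 2 (ℝ × F.axis)) →ₗᵢ[ℝ] E :=
  orthogonalCoprod (LinearIsometry.toSpanSingleton ℝ E F.norm_e₂) F.halfIsometry fun r p => by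
    simp [halfIsometry, inner_add_right, inner_smul_left, inner_smul_right,
      F.inner_e₂_e₁, F.inner_e₂_axis p.snd]

lemma isometry_toLp (a b : ℝ) (z : F.axis) :
    F.isometry (WithLp.toLp 2 (b, WithLp.toLp 2 (a, z))) = a • F.e₁ + b • F.e₂ + z := by
  simp only [isometry, halfIsometry, orthogonalCoprod_apply, WithLp.toLp_fst, WithLp.toLp_snd,
    LinearIsometry.toSpanSingleton_apply, Submodule.coe_subtypeₗᵢ, Submodule.subtype_apply]
  rw [add_left_comm, add_assoc]

lemma point_sub_origin (θ : ℝ) (q : ℝ × F.axis) :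
    F.point θ q - F.origin = F.isometry
      (WithLp.toLp 2 (q.1 * Real.sin θ, WithLp.toLp 2 (q.1 * Real.cos θ, q.2))) := by
  rw [isometry_toLp, point, add_assoc, add_assoc, add_sub_cancel_left, add_assoc]

lemma point_zero (q : ℝ × F.axis) :
    F.point 0 q = F.origin + F.halfIsometry (WithLp.toLp 2 q) := by
  simp [point, halfIsometry, add_assoc]

lemma isometry_point_zero : Isometry fun p : WithLp 2 (ℝ × F.axis) => F.point 0 p.ofLp := by
  simp only [F.point_zero]
  exact (isometry_add_left F.origin).comp F.halfIsometry.isometry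

lemma point_combo (t : ℝ) (p q : ℝ × F.axis) {a b : ℝ} (hab : a + b = 1) :
    F.point t (a • p + b • q) = a • F.point t p + b • F.point t q := by
  obtain rfl := eq_sub_of_add_eq' hab
  simp only [point, Prod.fst_add, Prod.snd_add, Prod.smul_fst, Prod.smul_snd, smul_eq_mul,
    Submodule.coe_add, Submodule.coe_smul]
  module

@[fun_prop]
lemma continuous_point : Continuous fun p : ℝ × (ℝ × F.axis) => F.point p.1 p.2 := by
  unfold point
  fun_prop

lemma inner_point_sub_e₁ (θ : ℝ) (q : ℝ × F.axis) :
    ⟪F.point θ q - F.origin, F.e₁⟫ = q.1 * Real.cos θ := by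
  rw [real_inner_comm]
  simp [point, add_assoc, inner_add_right, inner_smul_right,
    F.norm_e₁, F.inner_e₁_e₂, F.inner_e₁_axis q.2]

lemma inner_point_sub_e₂ (θ : ℝ) (q : ℝ × F.axis) :
    ⟪F.point θ q - F.origin, F.e₂⟫ = q.1 * Real.sin θ := by
  rw [real_inner_comm]
  simp [point, add_assoc, inner_add_right, inner_smul_right,
    F.norm_e₂, F.inner_e₂_e₁, F.inner_e₂_axis q.2]

lemma angle_point {θ : ℝ} {q : ℝ × F.axis} (hq : 0 < q.1)
    (hθ : θ ∈ Set.Ioo (-Real.pi) Real.pi) : F.angle (F.point θ q) = θ := by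
  rw [angle, inner_point_sub_e₁, inner_point_sub_e₂, polarAngle_mul_cos_mul_sin hq hθ]

lemma range_point_zero : Set.range (F.point 0) = {x | ⟪x - F.origin, F.e₂⟫ = 0} := by
  ext x
  refine ⟨?_, fun hx => ?_⟩
  · rintro ⟨q, rfl⟩
    simp [F.inner_point_sub_e₂]
  · have hz : x - F.origin - ⟪x - F.origin, F.e₁⟫ • F.e₁ ∈ F.axis := by
      have hx' : ⟪F.e₂, x - F.origin⟫ = 0 := (real_inner_comm _ _).trans hx
      rw [mem_axis_iff, inner_sub_right _ (x - F.origin), inner_sub_right _ (x - F.origin), hx']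
      simp [inner_smul_right, F.norm_e₁, F.inner_e₂_e₁, real_inner_comm F.e₁]
    exact ⟨(⟪x - F.origin, F.e₁⟫, ⟨_, hz⟩), by simp [point]⟩

lemma inter_angle_eq_zero_subset_range_point_zero (S : Set E) :
    S ∩ {x | F.angle x = 0} ⊆ Set.range (F.point 0) := fun x hx => by
  rw [range_point_zero]
  exact (polarAngle_eq_zero_iff.1 hx.2).2

lemma angle_point_zero_eq_zero_iff {q : ℝ × F.axis} : F.angle (F.point 0 q) = 0 ↔ 0 ≤ q.1 := by
  simp [angle, inner_point_sub_e₁, inner_point_sub_e₂, polarAngle_eq_zero_iff]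

lemma hinge_hinge_of_le (S : Set E) {s t : ℝ} (hst : s ≤ t) :
    F.hinge (F.hinge S t) s = F.hinge S s := by
  ext x
  exact ⟨fun hx => ⟨hx.1.1, hx.2⟩, fun hx => ⟨⟨hx.1, hx.2.1, hx.2.2.trans hst⟩, hx.2⟩⟩

lemma point_mem_hinge_iff {S : Set E} {θ t : ℝ} {q : ℝ × F.axis} (hq : 0 < q.1)
    (hθ : θ ∈ Set.Ioo (-Real.pi) Real.pi) :
    F.point θ q ∈ F.hinge S t ↔ F.point θ q ∈ S ∧ θ ≤ t := by
  simp [hinge, F.angle_point hq hθ, hθ.1.le]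

lemma radius_point (θ : ℝ) (q : ℝ × F.axis) : F.radius (F.point θ q) = |q.1| := by
  rw [radius, inner_point_sub_e₁, inner_point_sub_e₂, ← Real.sqrt_sq_eq_abs]
  congr 1
  linear_combination q.1 ^ 2 * Real.sin_sq_add_cos_sq θ

lemma norm_point_sub_sq (θ : ℝ) (q : ℝ × F.axis) :
    ‖F.point θ q - F.origin‖ ^ 2 = q.1 ^ 2 + ‖q.2‖ ^ 2 := by
  rw [point_sub_origin, LinearIsometry.norm_map,
    WithLp.prod_norm_sq_eq_of_L2, WithLp.prod_norm_sq_eq_of_L2]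
  simp only [Real.norm_eq_abs, sq_abs, WithLp.toLp_fst, WithLp.toLp_snd]
  linear_combination q.1 ^ 2 * Real.sin_sq_add_cos_sq θ

lemma norm_le_norm_point_sub (θ : ℝ) (q : ℝ × F.axis) : ‖q‖ ≤ ‖F.point θ q - F.origin‖ := by
  have hsq := F.norm_point_sub_sq θ q
  refine max_le (abs_le_of_sq_le_sq ?_ (norm_nonneg _)) (le_of_sq_le_sq ?_ (norm_nonneg _))
  · linarith [sq_nonneg ‖q.2‖]
  · linarith [sq_nonneg q.1]

lemma hinge_zero (S : Set E) : F.hinge S 0 = S ∩ {x | ⟪x - F.origin, F.e₂⟫ ≤ 0} := by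
  ext x
  simp [hinge, angle, neg_pi_le_polarAngle, polarAngle_nonpos_iff]

lemma radius_le_norm_sub (x : E) : F.radius x ≤ ‖x - F.origin‖ := by
  have hbessel : ⟪x - F.origin, F.e₁⟫ ^ 2 + ⟪x - F.origin, F.e₂⟫ ^ 2 ≤ ‖x - F.origin‖ ^ 2 := by
    simpa [Fin.sum_univ_two, real_inner_comm (x - F.origin)] using
      F.orthonormal.sum_inner_products_le (x - F.origin) (s := Finset.univ)
  exact (Real.sqrt_le_left (norm_nonneg _)).2 hbessel

lemma inner_sub_e₂_le_of_angle_le {x : E} {δ : ℝ} (hδ : 0 ≤ δ) (hx : F.angle x ≤ δ) :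
    ⟪x - F.origin, F.e₂⟫ ≤ δ * ‖x - F.origin‖ := by
  rcases le_or_gt (F.angle x) 0 with hneg | hpos
  · exact (polarAngle_nonpos_iff.1 hneg).trans (by positivity)
  · calc ⟪x - F.origin, F.e₂⟫
        = F.radius x * Real.sin (F.angle x) := (sqrt_mul_sin_polarAngle _ _).symm
      _ ≤ F.radius x * F.angle x :=
        mul_le_mul_of_nonneg_left (Real.sin_le hpos.le) (Real.sqrt_nonneg _)
      _ ≤ ‖x - F.origin‖ * δ :=
        mul_le_mul (F.radius_le_norm_sub x) hx hpos.le (norm_nonneg _)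
      _ = δ * ‖x - F.origin‖ := mul_comm _ _

lemma exists_mem_interior_inner_sub_e₂_eq_zero {P : Set E} (hPconv : Convex ℝ P)
    (hint : (interior (F.hinge P 0)).Nonempty) (hne : F.hinge P 0 ≠ P) :
    ∃ y ∈ interior P, ⟪y - F.origin, F.e₂⟫ = 0 := by
  obtain ⟨p, hp⟩ := hint
  obtain ⟨x, hxP, hx⟩ := Set.exists_of_ssubset
    (ssubset_of_subset_of_ne (fun _ hx => hx.1 : F.hinge P 0 ⊆ P) hne)
  rw [hinge_zero] at hx hp
  have hpP : p ∈ interior P := interior_mono Set.inter_subset_left hp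
  have hpb : ⟪p - F.origin, F.e₂⟫ ≤ 0 := (interior_subset hp).2
  have hxb : 0 < ⟪x - F.origin, F.e₂⟫ := not_le.1 fun hle => hx ⟨hxP, hle⟩
  set α := ⟪p - F.origin, F.e₂⟫
  set β := ⟪x - F.origin, F.e₂⟫
  have hβα : 0 < β - α := by linarith
  have hsum : β / (β - α) + -α / (β - α) = 1 := by field_simp; ring
  set y := (β / (β - α)) • p + (-α / (β - α)) • x
  have hyo : y - F.origin = (β / (β - α)) • (p - F.origin) + (-α / (β - α)) • (x - F.origin) := by
    rw [smul_sub, smul_sub, sub_add_sub_comm, ← add_smul, hsum, one_smul]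
  refine ⟨y, hPconv.combo_interior_self_mem_interior hpP hxP (by positivity)
    (div_nonneg (neg_nonneg.2 hpb) hβα.le) hsum, ?_⟩
  rw [hyo, inner_add_left, real_inner_smul_left, real_inner_smul_left]
  change β / (β - α) * α + -α / (β - α) * β = 0
  ring

lemma exists_mem_interior_angle_eq_zero {P : Set E} (hPconv : Convex ℝ P)
    (hint : (interior (F.hinge P 0)).Nonempty) (hne : F.hinge P 0 ≠ P)
    (hrange : ∀ x ∈ F.hinge P 0, -Real.pi < F.angle x) :
    (interior P ∩ {x | F.angle x = 0}).Nonempty := by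
  obtain ⟨y, hyP, hy⟩ := F.exists_mem_interior_inner_sub_e₂_eq_zero hPconv hint hne
  have hyK : y ∈ F.hinge P 0 := by
    rw [hinge_zero]
    exact ⟨interior_subset hyP, hy.le⟩
  exact ⟨y, hyP, polarAngle_eq_zero_of_neg_pi_lt (hrange y hyK) hy⟩

lemma exists_pos_and_point_zero_mem_interior {P : Set E}
    (hint : (interior P ∩ {x | F.angle x = 0}).Nonempty) :
    ∃ q, 0 < q.1 ∧ F.point 0 q ∈ interior P := by
  obtain ⟨y, hyP, hy⟩ := hint
  obtain ⟨q, rfl⟩ := F.inter_angle_eq_zero_subset_range_point_zero _ ⟨hyP, hy⟩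
  have hq : 0 ≤ q.1 := F.angle_point_zero_eq_zero_iff.1 hy
  have hcont : Continuous fun s : ℝ => F.point 0 (q.1 + s, q.2) := by fun_prop
  have hnear : ∀ᶠ s in 𝓝[>] (0 : ℝ), F.point 0 (q.1 + s, q.2) ∈ interior P :=
    nhdsWithin_le_nhds (hcont.continuousAt.preimage_mem_nhds
      (by simpa using isOpen_interior.mem_nhds hyP))
  obtain ⟨s, hsP, hs⟩ := (hnear.and self_mem_nhdsWithin).exists
  exact ⟨_, add_pos_of_nonneg_of_pos hq hs, hsP⟩

lemma hinge_zero_inter_angle_eq_zero (S : Set E) :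
    F.hinge S 0 ∩ {x | F.angle x = 0} = S ∩ {x | F.angle x = 0} := by
  ext x
  exact ⟨fun hx => ⟨hx.1.1, hx.2⟩,
    fun hx => ⟨⟨hx.1, neg_pi_le_polarAngle _ _, hx.2.le⟩, hx.2⟩⟩

lemma isBounded_preimage_point {S : Set E} (hS : Bornology.IsBounded S) (θ : ℝ) :
    Bornology.IsBounded (F.point θ ⁻¹' S) := by
  obtain ⟨R, hR⟩ := hS.subset_closedBall F.origin
  refine (isBounded_closedBall (x := (0 : ℝ × F.axis)) (r := R)).subset fun q hq => ?_
  exact mem_closedBall_zero_iff.2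
    ((F.norm_le_norm_point_sub θ q).trans (mem_closedBall_iff_norm.1 (hR hq)))

section FiniteDimensional

variable [FiniteDimensional ℝ E]

lemma finrank_axis_add_two : Module.finrank ℝ F.axis + 2 = Module.finrank ℝ E := by
  have hspan : Module.finrank ℝ (Submodule.span ℝ {F.e₁, F.e₂}) = 2 := by
    rw [← Matrix.range_cons_cons_empty F.e₁ F.e₂ ![],
      finrank_span_eq_card F.orthonormal.linearIndependent, Fintype.card_fin]
  rw [add_comm, ← hspan, Submodule.finrank_add_finrank_orthogonal]

/-- The Cartesian coordinates of the frame, as an isometric equivalence. -/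
def isometryEquiv : WithLp 2 (ℝ × WithLp 2 (ℝ × F.axis)) ≃ₗᵢ[ℝ] E :=
  F.isometry.toLinearIsometryEquiv <| by
    rw [finrank_withLp_real_prod, finrank_withLp_real_prod, ← F.finrank_axis_add_two]
    ring

lemma exists_pos_mul_norm_le_inner_sub_e₂ {P : Set E} (hPcl : IsClosed P)
    (hPconv : Convex ℝ P) (ho : F.origin ∈ P) {R : ℝ} (hR₀ : 0 < R)
    (hR : F.hinge P 0 ⊆ ball F.origin R) :
    ∃ β > 0, ∀ x ∈ P, R ≤ ‖x - F.origin‖ → β * ‖x - F.origin‖ ≤ ⟪x - F.origin, F.e₂⟫ := by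
  have hpos : ∀ x ∈ sphere F.origin R ∩ P, 0 < ⟪x - F.origin, F.e₂⟫ := by
    rintro x ⟨hxR, hxP⟩
    by_contra! hx
    have hball : x ∈ ball F.origin R := hR (by rw [hinge_zero]; exact ⟨hxP, hx⟩)
    exact (mem_ball.1 hball).ne (mem_sphere.1 hxR)
  obtain ⟨β, hβ, hβle⟩ := ((isCompact_sphere F.origin R).inter_right hPcl).exists_forall_le'
    (f := fun x => ⟪x - F.origin, F.e₂⟫) (by fun_prop) hpos
  refine ⟨β / R, by positivity, fun x hxP hx => ?_⟩
  have hn : 0 < ‖x - F.origin‖ := hR₀.trans_le hx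
  set s := R / ‖x - F.origin‖ with hs
  have hy : F.origin + s • (x - F.origin) ∈ sphere F.origin R ∩ P := by
    refine ⟨?_, hPconv.add_smul_sub_mem ho hxP ⟨by positivity, (div_le_one hn).2 hx⟩⟩
    rw [mem_sphere_iff_norm, add_sub_cancel_left, norm_smul, Real.norm_of_nonneg (by positivity),
      hs, div_mul_cancel₀ _ hn.ne']
  have hβy := hβle _ hy
  rw [add_sub_cancel_left, real_inner_smul_left, hs, div_mul_eq_mul_div, le_div_iff₀ hn] at hβy
  rwa [div_mul_eq_mul_div, div_le_iff₀ hR₀, mul_comm _ R]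

lemma exists_isBounded_hinge {P : Set E} (hPcl : IsClosed P)
    (hPconv : Convex ℝ P) (ho : F.origin ∈ P) (hbdd : Bornology.IsBounded (F.hinge P 0)) :
    ∃ δ > 0, Bornology.IsBounded (F.hinge P δ) := by
  obtain ⟨R, hR₀, hR⟩ := hbdd.subset_ball_lt 0 F.origin
  obtain ⟨β, hβ, hβle⟩ := F.exists_pos_mul_norm_le_inner_sub_e₂ hPcl hPconv ho hR₀ hR
  refine ⟨β / 2, by positivity, (isBounded_ball (x := F.origin) (r := R)).subset fun x hx => ?_⟩
  rw [mem_ball_iff_norm]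
  by_contra! hfar
  have hlow := hβle x hx.1 hfar
  have hupp := F.inner_sub_e₂_le_of_angle_le (by positivity) hx.2.2
  nlinarith [mul_pos hβ (hR₀.trans_le hfar)]

lemma hinge_zero_eq_inter_halfSpace {ι : Type*} [Fintype ι]
    [Nonempty ι] {v : ι → E} (hv : AffineIndependent ℝ v)
    (hcard : Fintype.card ι = Module.finrank ℝ E) {P : Set E} {a : E} {c : ℝ} (ha : a ≠ 0)
    (hint : (interior (P ∩ {x | ⟪a, x⟫ ≤ c})).Nonempty) (hav : ∀ i, ⟪a, v i⟫ = c)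
    (hangle : ∀ i, F.angle (v i) = 0) (hnonpos : ∀ x ∈ P ∩ {x | ⟪a, x⟫ ≤ c}, F.angle x ≤ 0) :
    F.hinge P 0 = P ∩ {x | ⟪a, x⟫ ≤ c} := by
  obtain ⟨p, hp⟩ := hint
  have hle_iff (x : E) : ⟪F.e₂, x⟫ ≤ ⟪F.e₂, F.origin⟫ ↔ ⟪x - F.origin, F.e₂⟫ ≤ 0 := by
    rw [← sub_nonpos, ← inner_sub_right, real_inner_comm]
  have he₂v (i : ι) : ⟪F.e₂, v i⟫ = ⟪F.e₂, F.origin⟫ := by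
    rw [← sub_eq_zero, ← inner_sub_right, real_inner_comm]
    exact (polarAngle_eq_zero_iff.1 (hangle i)).2
  have hap : ⟪a, p⟫ < c := inner_lt_of_mem_interior ha Set.inter_subset_right hp
  have he₂p : ⟪F.e₂, p⟫ < ⟪F.e₂, F.origin⟫ := inner_lt_of_mem_interior
    (norm_ne_zero_iff.1 (by simp [F.norm_e₂]))
    (fun x hx => (hle_iff x).2 (polarAngle_nonpos_iff.1 (hnonpos x hx))) hp
  rw [hinge_zero, setOf_inner_le_eq_of_affineIndependent hv hcard hav he₂v hap he₂p]
  simp only [hle_iff]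

variable [MeasurableSpace E] [BorelSpace E]

lemma measurable_angle : Measurable F.angle :=
  measurable_polarAngle.comp (f := fun x => (⟪x - F.origin, F.e₁⟫, ⟪x - F.origin, F.e₂⟫))
    (by fun_prop)

instance : SFinite F.coordMeasure := by
  unfold coordMeasure
  infer_instance

instance : IsLocallyFiniteMeasure F.coordMeasure := by
  unfold coordMeasure
  infer_instance

lemma ae_coordMeasure_pos : ∀ᵐ q ∂F.coordMeasure, 0 < q.1 :=
  Measure.quasiMeasurePreserving_fst.ae ae_radialMeasure_pos

lemma coordMeasure_eq_withDensity :
    F.coordMeasure = (volume.restrict (Set.Ioi 0 ×ˢ Set.univ)).withDensity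
      fun q => ENNReal.ofReal q.1 := by
  rw [coordMeasure, radialMeasure, prod_withDensity_left₀ ENNReal.measurable_ofReal.aemeasurable,
    Measure.volume_eq_prod, ← Measure.prod_restrict, Measure.restrict_univ]

lemma coordMeasure_absolutelyContinuous : F.coordMeasure ≪ volume := by
  rw [coordMeasure_eq_withDensity]
  exact (withDensity_absolutelyContinuous _ _).trans Measure.restrict_le_self.absolutelyContinuous

lemma measurePreserving_cartesian :
    MeasurePreserving
      (fun p : (ℝ × ℝ) × F.axis => F.origin + (p.1.1 • F.e₁ + p.1.2 • F.e₂ + p.2)) := by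
  have hswap : MeasurePreserving (fun p : (ℝ × ℝ) × F.axis => (p.1.2, (p.1.1, p.2))) :=
    volume_preserving_prodAssoc.comp
      (Measure.measurePreserving_swap.prod (MeasurePreserving.id volume))
  have hcoord := (WithLp.volume_preserving_toLp ℝ (WithLp 2 (ℝ × F.axis))).comp
    (((MeasurePreserving.id volume).prod (WithLp.volume_preserving_toLp ℝ F.axis)).comp hswap)
  simpa [Function.comp_def, isometryEquiv, isometry_toLp] using
    (measurePreserving_add_left volume F.origin).comp
      (F.isometryEquiv.measurePreserving.comp hcoord)

lemma measurePreserving_point :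
    MeasurePreserving (fun p : ℝ × (ℝ × F.axis) => F.point p.1 p.2)
      ((volume.restrict (Set.Ioo (-Real.pi) Real.pi)).prod F.coordMeasure) volume := by
  have hassoc := ((Measure.measurePreserving_swap.prod (MeasurePreserving.id volume)).comp
    (measurePreserving_prodAssoc (volume.restrict (Set.Ioo (-Real.pi) Real.pi))
      radialMeasure (volume : Measure F.axis)).symm)
  simpa [Function.comp_def, MeasurableEquiv.prodAssoc, point, add_assoc, coordMeasure] using
    (F.measurePreserving_cartesian.comp
      (measurePreserving_mul_cos_mul_sin.prod (MeasurePreserving.id volume))).comp hassoc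

lemma ae_indicator_hinge_point {G : Type*} [Zero G] (S : Set E) (f : E → G) (t : ℝ) :
    ∀ᵐ p ∂(volume.restrict (Set.Ioo (-Real.pi) Real.pi)).prod F.coordMeasure,
      (F.hinge S t).indicator f (F.point p.1 p.2) = (Set.Iic t ×ˢ Set.univ).indicator
        (fun p => S.indicator f (F.point p.1 p.2)) p := by
  filter_upwards [Measure.quasiMeasurePreserving_fst.ae (ae_restrict_mem measurableSet_Ioo),
    Measure.quasiMeasurePreserving_snd.ae F.ae_coordMeasure_pos] with p hθ hr
  by_cases ht : p.1 ≤ t <;> by_cases hS : F.point p.1 p.2 ∈ S <;>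
    simp [hinge, Set.indicator, F.angle_point hr hθ, ht, hS, hθ.1.le]

variable {G : Type*} [NormedAddCommGroup G] [NormedSpace ℝ G]

lemma measurableSet_hinge {S : Set E} (hS : MeasurableSet S) (t : ℝ) :
    MeasurableSet (F.hinge S t) :=
  hS.inter (F.measurable_angle measurableSet_Icc)

lemma setIntegral_hinge {S : Set E} (hS : MeasurableSet S) {f : E → G}
    (hf : IntegrableOn f S) {t : ℝ} (ht : t ∈ Set.Ioo (-Real.pi) Real.pi) :
    ∫ x in F.hinge S t, f x =
      ∫ θ in (-Real.pi)..t, ∫ q, S.indicator f (F.point θ q) ∂F.coordMeasure := by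
  have hmp := F.measurePreserving_point
  have hint : Integrable (fun p => S.indicator f (F.point p.1 p.2))
      ((volume.restrict (Set.Ioo (-Real.pi) Real.pi)).prod F.coordMeasure) :=
    hmp.integrable_comp_of_integrable (hf.integrable_indicator hS)
  have hinter : Set.Iic t ∩ Set.Ioo (-Real.pi) Real.pi = Set.Ioc (-Real.pi) t := by
    grind
  calc ∫ x in F.hinge S t, f x
      = ∫ p, (F.hinge S t).indicator f (F.point p.1 p.2)
          ∂(volume.restrict (Set.Ioo (-Real.pi) Real.pi)).prod F.coordMeasure := by
        rw [← integral_indicator (F.measurableSet_hinge hS t), ← hmp.map_eq,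
          integral_map hmp.aemeasurable]
        rw [hmp.map_eq]
        exact ((hf.mono_set fun x hx => hx.1).integrable_indicator
          (F.measurableSet_hinge hS t)).aestronglyMeasurable
    _ = ∫ p in Set.Iic t ×ˢ Set.univ, S.indicator f (F.point p.1 p.2)
          ∂(volume.restrict (Set.Ioo (-Real.pi) Real.pi)).prod F.coordMeasure := by
        rw [integral_congr_ae (F.ae_indicator_hinge_point S f t),
          integral_indicator (measurableSet_Iic.prod MeasurableSet.univ)]
    _ = ∫ θ in (-Real.pi)..t, ∫ q, S.indicator f (F.point θ q) ∂F.coordMeasure := by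
        rw [setIntegral_prod _ hint.integrableOn, Measure.restrict_univ,
          Measure.restrict_restrict measurableSet_Iic, hinter,
          intervalIntegral.integral_of_le ht.1.le]

lemma continuousAt_integral_indicator_point {S : Set E} (hS : MeasurableSet S)
    (hbdd : Bornology.IsBounded S) {f : E → G} (hf : Continuous f) {t : ℝ}
    (hmem : ∀ᵐ q ∂F.coordMeasure, ∀ᶠ θ in 𝓝 t, F.point θ q ∈ S ↔ F.point t q ∈ S) :
    ContinuousAt (fun θ => ∫ q, S.indicator f (F.point θ q) ∂F.coordMeasure) t := by
  obtain ⟨R, hR⟩ := hbdd.subset_closedBall F.origin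
  obtain ⟨C, hC⟩ := (isCompact_closedBall F.origin R).exists_bound_of_continuousOn hf.continuousOn
  have hbound (θ : ℝ) (q : ℝ × F.axis) :
      ‖S.indicator f (F.point θ q)‖ ≤ (closedBall 0 R).indicator (fun _ => |C|) q := by
    by_cases hq : F.point θ q ∈ S
    · have hnorm : ‖q‖ ≤ R :=
        (F.norm_le_norm_point_sub θ q).trans (mem_closedBall_iff_norm.1 (hR hq))
      simpa [hq, hnorm] using (hC _ (hR hq)).trans (le_abs_self C)
    · rw [Set.indicator_of_notMem hq, norm_zero]
      exact Set.indicator_nonneg (fun _ _ => abs_nonneg C) q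
  refine continuousAt_of_dominated (.of_forall fun θ => ?_)
    (.of_forall fun θ => .of_forall (hbound θ)) ?_ ?_
  · exact ((hf.comp (F.continuous_point.comp (.prodMk_right θ))).aestronglyMeasurable).indicator
      ((F.continuous_point.comp (.prodMk_right θ)).measurable hS)
  · exact (integrable_indicator_iff measurableSet_closedBall).2
      (integrableOn_const (isCompact_closedBall _ _).measure_lt_top.ne)
  · filter_upwards [hmem] with q hq
    have hcont : ContinuousAt (fun θ => f (F.point θ q)) t := by fun_prop
    by_cases hqS : F.point t q ∈ S
    · refine hcont.congr (hq.mono fun θ hθ => ?_)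
      exact (Set.indicator_of_mem (hθ.2 hqS) f).symm
    · refine (continuousAt_const (y := 0)).congr (hq.mono fun θ hθ => ?_)
      exact (Set.indicator_of_notMem (mt hθ.1 hqS) f).symm

lemma hasDerivAt_setIntegral_hinge_of_isBounded [CompleteSpace G] {S : Set E}
    (hS : MeasurableSet S) (hbdd : Bornology.IsBounded S) {f : E → G} (hf : Continuous f) {t : ℝ}
    (ht : t ∈ Set.Ioo (-Real.pi) Real.pi)
    (hmem : ∀ᵐ q ∂F.coordMeasure, ∀ᶠ θ in 𝓝 t, F.point θ q ∈ S ↔ F.point t q ∈ S) :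
    HasDerivAt (fun t => ∫ x in F.hinge S t, f x)
      (∫ q, S.indicator f (F.point t q) ∂F.coordMeasure) t := by
  have hfS : IntegrableOn f S := integrableOn_of_isBounded hbdd hf
  have hint : IntegrableOn (fun θ => ∫ q, S.indicator f (F.point θ q) ∂F.coordMeasure)
      (Set.Ioo (-Real.pi) Real.pi) :=
    (F.measurePreserving_point.integrable_comp_of_integrable
      (hfS.integrable_indicator hS)).integral_prod_left
  have hderiv := intervalIntegral.integral_hasDerivAt_right (a := -Real.pi)
    ((intervalIntegrable_iff_integrableOn_Ioc_of_le ht.1.le).2 (hint.mono_set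
      fun x hx => ⟨hx.1, hx.2.trans_lt ht.2⟩))
    ⟨Set.Ioo (-Real.pi) Real.pi, Ioo_mem_nhds ht.1 ht.2, hint.aestronglyMeasurable⟩
    (F.continuousAt_integral_indicator_point hS hbdd hf hmem)
  refine hderiv.congr_of_eventuallyEq ?_
  filter_upwards [Ioo_mem_nhds ht.1 ht.2] with s hs using F.setIntegral_hinge hS hfS hs

lemma ae_eventually_point_mem_iff {P : Set E} (hPcl : IsClosed P) (hPconv : Convex ℝ P) {t : ℝ}
    (hint : ∃ q, F.point t q ∈ interior P) :
    ∀ᵐ q ∂F.coordMeasure, ∀ᶠ θ in 𝓝 t, F.point θ q ∈ P ↔ F.point t q ∈ P := by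
  obtain ⟨q₀, hq₀⟩ := hint
  have hcont : Continuous (F.point t) := F.continuous_point.comp (.prodMk_right t)
  set B := F.point t ⁻¹' interior P
  have hBopen : IsOpen B := isOpen_interior.preimage hcont
  have hBconv : Convex ℝ B := fun p hp q hq a b ha hb hab => by
    simpa only [B, Set.mem_preimage, F.point_combo t p q hab]
      using hPconv.interior hp hq ha hb hab
  have hclosure (q : ℝ × F.axis) (hq : F.point t q ∈ P) : q ∈ closure B := by
    refine closure_mono ?_ (segment_subset_closure_openSegment (right_mem_segment ℝ q₀ q))
    rintro _ ⟨a, b, ha, hb, hab, rfl⟩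
    simpa only [B, Set.mem_preimage, F.point_combo t q₀ q hab] using
      hPconv.combo_interior_self_mem_interior hq₀ hq ha hb.le hab
  have hnull : ∀ᵐ q ∂F.coordMeasure, q ∉ frontier B :=
    F.coordMeasure_absolutelyContinuous.ae_le
      (measure_eq_zero_iff_ae_notMem.1 (hBconv.addHaar_frontier (volume.prod volume)))
  filter_upwards [hnull] with q hq
  have hcontθ : ContinuousAt (fun θ => F.point θ q) t := by fun_prop
  by_cases hqP : F.point t q ∈ P
  · have hqB : q ∈ B := by
      by_contra hqB
      exact hq ⟨hclosure q hqP, by rwa [hBopen.interior_eq]⟩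
    filter_upwards [hcontθ.eventually (isOpen_interior.mem_nhds hqB)] with θ hθ
    simp [hqP, interior_subset hθ]
  · filter_upwards [hcontθ.eventually (hPcl.isOpen_compl.mem_nhds hqP)] with θ hθ
    simpa [hqP] using hθ

lemma hasDerivAt_setIntegral_hinge [CompleteSpace G] {P : Set E} (hPcl : IsClosed P)
    (hPconv : Convex ℝ P) {t δ : ℝ} (ht : t ∈ Set.Ioo (-Real.pi) Real.pi) (hδ : t < δ)
    (hbdd : Bornology.IsBounded (F.hinge P δ)) (hint : ∃ q, F.point t q ∈ interior P)
    {f : E → G} (hf : Continuous f) :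
    HasDerivAt (fun s => ∫ x in F.hinge P s, f x)
      (∫ q, P.indicator f (F.point t q) ∂F.coordMeasure) t := by
  have hnear : ∀ᶠ θ in 𝓝 t, θ ∈ Set.Ioo (-Real.pi) Real.pi ∧ θ < δ :=
    Filter.Eventually.and (Ioo_mem_nhds ht.1 ht.2) (eventually_lt_nhds hδ)
  have hmem : ∀ᵐ q ∂F.coordMeasure,
      ∀ᶠ θ in 𝓝 t, F.point θ q ∈ F.hinge P δ ↔ F.point t q ∈ F.hinge P δ := by
    filter_upwards [F.ae_coordMeasure_pos, F.ae_eventually_point_mem_iff hPcl hPconv hint]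
      with q hq hqP
    filter_upwards [hqP, hnear] with θ hθP hθ
    simp [F.point_mem_hinge_iff hq hθ.1, F.point_mem_hinge_iff hq ht, hθP, hθ.2.le, hδ.le]
  have hslice : ∫ q, (F.hinge P δ).indicator f (F.point t q) ∂F.coordMeasure =
      ∫ q, P.indicator f (F.point t q) ∂F.coordMeasure := by
    refine integral_congr_ae ?_
    filter_upwards [F.ae_coordMeasure_pos] with q hq
    classical
    simp [Set.indicator_apply, F.point_mem_hinge_iff hq ht, hδ.le]
  rw [← hslice]
  refine (F.hasDerivAt_setIntegral_hinge_of_isBounded (F.measurableSet_hinge hPcl.measurableSet δ)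
    hbdd hf ht hmem).congr_of_eventuallyEq ?_
  filter_upwards [hnear] with s hs
  rw [F.hinge_hinge_of_le P hs.2.le]

lemma measurePreserving_point_zero :
    MeasurePreserving (F.point 0) volume
      (μHE[Module.finrank ℝ E - 1].restrict (Set.range (F.point 0))) := by
  have hdim : Module.finrank ℝ (WithLp 2 (ℝ × F.axis)) = Module.finrank ℝ E - 1 := by
    rw [finrank_withLp_real_prod, ← F.finrank_axis_add_two]
    omega
  have hrange : Set.range (fun p : WithLp 2 (ℝ × F.axis) => F.point 0 p.ofLp) =
      Set.range (F.point 0) :=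
    (WithLp.ofLp_surjective 2).range_comp (F.point 0)
  have hmap := F.isometry_point_zero.map_euclideanHausdorffMeasure (d := Module.finrank ℝ E - 1)
  rw [← hdim, InnerProductSpace.euclideanHausdorffMeasure_eq_volume, hdim, hrange] at hmap
  exact (MeasurePreserving.mk F.isometry_point_zero.continuous.measurable hmap).comp
    (WithLp.volume_preserving_toLp ℝ F.axis)

lemma measurableEmbedding_point_zero : MeasurableEmbedding (F.point 0) :=
  F.isometry_point_zero.isClosedEmbedding.measurableEmbedding.comp
    (MeasurableEquiv.toLp 2 (ℝ × F.axis)).measurableEmbedding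

lemma setIntegral_euclideanHausdorffMeasure_inter_angle_eq_zero {S : Set E}
    (hS : MeasurableSet S) (f : E → G) :
    ∫ x in S ∩ {x | F.angle x = 0}, F.radius x • f x ∂μHE[Module.finrank ℝ E - 1] =
      ∫ q, S.indicator f (F.point 0 q) ∂F.coordMeasure := by
  have hcone : MeasurableSet (S ∩ {x | F.angle x = 0}) :=
    hS.inter (F.measurable_angle (measurableSet_singleton 0))
  rw [coordMeasure_eq_withDensity, integral_withDensity_eq_integral_toReal_smul (by fun_prop)
    (.of_forall fun q => ENNReal.ofReal_lt_top),
    ← integral_indicator (measurableSet_Ioi.prod MeasurableSet.univ),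
    ← Measure.restrict_restrict_of_subset (F.inter_angle_eq_zero_subset_range_point_zero S),
    ← F.measurePreserving_point_zero.setIntegral_preimage_emb F.measurableEmbedding_point_zero,
    ← integral_indicator (F.measurableEmbedding_point_zero.measurable hcone)]
  congr 1 with q
  classical
  by_cases hqS : F.point 0 q ∈ S
  · rcases lt_trichotomy q.1 0 with hq | hq | hq
    · simp [Set.indicator_apply, F.angle_point_zero_eq_zero_iff, hq.not_ge, hq.not_gt]
    · simp [Set.indicator_apply, F.radius_point, hq]
    · simp [Set.indicator_apply, F.angle_point_zero_eq_zero_iff, F.radius_point, hq, hq.le, hqS,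
        abs_of_pos hq]
  · simp [Set.indicator_apply, hqS]

lemma coordMeasure_pos_of_isOpen {U : Set (ℝ × F.axis)} (hU : IsOpen U)
    (hne : ∃ q ∈ U, 0 < q.1) : 0 < F.coordMeasure U := by
  obtain ⟨q, hqU, hq⟩ := hne
  have hpos : 0 < volume (U ∩ Set.Ioi 0 ×ˢ Set.univ) :=
    (hU.inter (isOpen_Ioi.prod isOpen_univ)).measure_pos volume ⟨q, hqU, hq, trivial⟩
  refine pos_iff_ne_zero.2 fun hzero => hpos.ne' (measure_mono_null ?_ <|
    (Measure.restrict_apply_eq_zero' (measurableSet_Ioi.prod MeasurableSet.univ)).1 <|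
    (withDensity_apply_eq_zero' (by fun_prop)).1 (F.coordMeasure_eq_withDensity ▸ hzero))
  rintro p ⟨hpU, hp⟩
  exact ⟨⟨by simpa using hp.1, hpU⟩, hp⟩

lemma setIntegral_radius_pos {P : Set E} (hP : MeasurableSet P)
    (hbdd : Bornology.IsBounded (F.hinge P 0))
    (hint : (interior P ∩ {x | F.angle x = 0}).Nonempty) :
    0 < ∫ x in P ∩ {x | F.angle x = 0}, F.radius x ∂μHE[Module.finrank ℝ E - 1] := by
  have hslice := F.setIntegral_euclideanHausdorffMeasure_inter_angle_eq_zero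
    (F.measurableSet_hinge hP 0) fun _ => (1 : ℝ)
  have hcont : Continuous (F.point 0) := F.continuous_point.comp (.prodMk_right 0)
  obtain ⟨q, hq, hqP⟩ := F.exists_pos_and_point_zero_mem_interior hint
  have hopen : IsOpen (F.point 0 ⁻¹' interior P ∩ {q | 0 < q.1}) :=
    (isOpen_interior.preimage hcont).inter (isOpen_lt continuous_const continuous_fst)
  have hsubset : F.point 0 ⁻¹' interior P ∩ {q | 0 < q.1} ⊆ F.point 0 ⁻¹' F.hinge P 0 :=
    fun p hp => (F.point_mem_hinge_iff hp.2 (by simp [Real.pi_pos])).2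
      ⟨interior_subset hp.1, le_rfl⟩
  have hindicator : ∫ q, (F.hinge P 0).indicator (fun _ => (1 : ℝ)) (F.point 0 q)
      ∂F.coordMeasure = F.coordMeasure.real (F.point 0 ⁻¹' F.hinge P 0) :=
    integral_indicator_one (hcont.measurable (F.measurableSet_hinge hP 0))
  simp only [hinge_zero_inter_angle_eq_zero, smul_eq_mul, mul_one] at hslice
  rw [hslice, hindicator]
  exact ENNReal.toReal_pos ((F.coordMeasure_pos_of_isOpen hopen ⟨q, ⟨hqP, hq⟩, hq⟩).trans_le
    (measure_mono hsubset)).ne' (F.isBounded_preimage_point hbdd 0).measure_lt_top.ne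

lemma hasDerivAt_setIntegral_hinge_zero {P : Set E} (hPcl : IsClosed P) (hPconv : Convex ℝ P)
    (ho : F.origin ∈ P) (hbdd : Bornology.IsBounded (F.hinge P 0))
    (hint : (interior P ∩ {x | F.angle x = 0}).Nonempty) {f : E → ℝ} (hf : Continuous f) :
    HasDerivAt (fun t => ∫ x in F.hinge P t, f x)
      (∫ x in P ∩ {x | F.angle x = 0}, F.radius x * f x ∂μHE[Module.finrank ℝ E - 1]) 0 := by
  obtain ⟨q, -, hq⟩ := F.exists_pos_and_point_zero_mem_interior hint
  obtain ⟨δ, hδ, hδbdd⟩ := F.exists_isBounded_hinge hPcl hPconv ho hbdd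
  refine (F.hasDerivAt_setIntegral_hinge hPcl hPconv (by simp [Real.pi_pos]) hδ hδbdd ⟨q, hq⟩
    hf).congr_deriv ?_
  exact (F.setIntegral_euclideanHausdorffMeasure_inter_angle_eq_zero hPcl.measurableSet f).symm

end FiniteDimensional

section Isotropic

variable {d : ℕ} (F : CylFrame (Euc d)) {P : Set (Euc d)}

lemma hasFirstVariation_hinge (hPcl : IsClosed P) (hPconv : Convex ℝ P) (ho : F.origin ∈ P)
    (hbdd : Bornology.IsBounded (F.hinge P 0))
    (hint : (interior P ∩ {x | F.angle x = 0}).Nonempty) :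
    HasFirstVariation (F.hinge P)
      (fun f => ∫ x in P ∩ {x | F.angle x = 0}, F.radius x * f x ∂μHE[d - 1]) 0 where
  eventually_isBounded := by
    obtain ⟨δ, hδ, hδbdd⟩ := F.exists_isBounded_hinge hPcl hPconv ho hbdd
    filter_upwards [eventually_lt_nhds hδ] with t ht
    exact hδbdd.subset fun x hx => ⟨hx.1, hx.2.1, hx.2.2.trans ht.le⟩
  hasDerivAt_setIntegral f hf := by
    simpa only [finrank_euclideanSpace_fin] using
      F.hasDerivAt_setIntegral_hinge_zero hPcl hPconv ho hbdd hint hf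

end Isotropic

end CylFrame

theorem stmt5_general {d : ℕ} (F : CylFrame (Euc d)) {P : Set (Euc d)} (hPcl : IsClosed P)
    (hPconv : Convex ℝ P) (ho : F.origin ∈ P) (hbdd : Bornology.IsBounded (F.hinge P 0))
    (hiso : IsIsotropic (F.hinge P 0)) (hint : (interior P ∩ {x | F.angle x = 0}).Nonempty) :
    ∃ V : ℝ, HasDerivAt (fun t => (volume (F.hinge P t)).toReal) V 0 ∧
      HasDerivAt (fun t => (covMatrix (F.hinge P t)).det / (volume (F.hinge P t)).toReal ^ 2)
        (((∫ x in P ∩ {x | F.angle x = 0}, ‖x‖ ^ 2 * F.radius x ∂μH[(d - 1 : ℝ)]) /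
            (∫ x in P ∩ {x | F.angle x = 0}, F.radius x ∂μH[(d - 1 : ℝ)]) - d - 2) * V /
          (volume (F.hinge P 0)).toReal ^ 3) 0 := by
  have hd : 2 ≤ d := by
    have hfinrank := F.finrank_axis_add_two
    rw [finrank_euclideanSpace_fin] at hfinrank
    omega
  have hvar := F.hasFirstVariation_hinge hPcl hPconv ho hbdd hint
  have hpos := F.setIntegral_radius_pos hPcl.measurableSet hbdd hint
  refine ⟨_, hvar.hasDerivAt_volume, (hvar.hasDerivAt_det_covMatrix_div_sq hiso
    (hiso.volume_real_ne_zero ⟨0, by omega⟩)).congr_deriv ?_⟩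
  rw [finrank_euclideanSpace_fin] at hpos
  rw [← Nat.cast_pred (by omega), setIntegral_div_setIntegral_hausdorffMeasure, Measure.real]
  simp only [mul_comm (F.radius _)]
  field_simp
  ring

/-- Lemma: derivative with respect to hinging. Let `K` be an isotropic
simplicial polytope with irredundant H-representation `K = ∩ᵢ Hᵢ`, let `P` be the polyhedron
obtained by relaxing the halfspace of facet `i'`, and introduce cylindrical coordinates
`(ρ, θ, z)` around the axis `Z` spanned by all vertices of facet `i'` except `v j'`, oriented so
that the facet has `θ = 0` and `K` has `θ ∈ (-π, 0]`. With `K_t = {x ∈ P : θ(x) ∈ [-π, t]}`,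
`S₀ = P ∩ {θ = 0}`, and `D` the distribution on `S₀` with density proportional to `ρ`, the
function `t ↦ L_{K_t}^{2d} = det A(K_t) / vol(K_t)²` is differentiable at `0` with derivative
`(E_{X ∼ D}[‖X‖²] - d - 2) · (d/dt vol K_t |₀) / (vol K)³`. -/
theorem stmt5 {d m : ℕ} (K : Set (Euc d)) (hbody : IsConvexBody K)
    (hiso : IsIsotropic K) (hsimp : IsSimplicialPolytope d K)
    (a : Fin m → Euc d) (c : Fin m → ℝ) (ha : ∀ i, a i ≠ 0)
    (hrep : K = ⋂ i, {x : Euc d | ⟪a i, x⟫ ≤ c i})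
    (hirr : ∀ i : Fin m, K ≠ ⋂ j ∈ Finset.univ.erase i, {x : Euc d | ⟪a j, x⟫ ≤ c j})
    (i' : Fin m)
    (P : Set (Euc d)) (hP : P = ⋂ j ∈ Finset.univ.erase i', {x : Euc d | ⟪a j, x⟫ ≤ c j})
    (v : Fin d → Euc d) (hvind : AffineIndependent ℝ v)
    (hfacet : K ∩ {x : Euc d | ⟪a i', x⟫ = c i'} = convexHull ℝ (Set.range v))
    (j' : Fin d)
    (Z : AffineSubspace ℝ (Euc d)) (hZ : Z = affineSpan ℝ (v '' {j | j ≠ j'}))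
    (o : Euc d) (ho : o ∈ (Z : Set (Euc d)) ∩ K)
    (u w : Euc d) (hu : u ∈ Z.directionᗮ) (hw : w ∈ Z.directionᗮ)
    (hun : ‖u‖ = 1) (hwn : ‖w‖ = 1) (huw : ⟪u, w⟫ = 0)
    (θ ρ : Euc d → ℝ)
    (hθ : θ = fun x => polarAngle ⟪x - o, u⟫ ⟪x - o, w⟫)
    (hρ : ρ = fun x => Real.sqrt (⟪x - o, u⟫ ^ 2 + ⟪x - o, w⟫ ^ 2))
    (horient : ∀ x ∈ convexHull ℝ (Set.range v), θ x = 0)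
    (hKrange : ∀ x ∈ K, θ x ∈ Set.Ioc (-Real.pi) 0)
    (Kt : ℝ → Set (Euc d))
    (hKt : Kt = fun t => {x ∈ P | θ x ∈ Set.Icc (-Real.pi) t})
    (S₀ : Set (Euc d)) (hS₀ : S₀ = P ∩ {x : Euc d | θ x = 0})
    (EX : ℝ)
    (hEX : EX = (∫ x in S₀, ‖x‖ ^ 2 * ρ x ∂(μH[(d - 1 : ℝ)])) /
                (∫ x in S₀, ρ x ∂(μH[(d - 1 : ℝ)]))) :
    ∃ V : ℝ, HasDerivAt (fun t => (volume (Kt t)).toReal) V 0 ∧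
      HasDerivAt (fun t => (covMatrix (Kt t)).det / (volume (Kt t)).toReal ^ 2)
        ((EX - d - 2) * V / (volume K).toReal ^ 3) 0 := by
  subst hθ hρ hKt hS₀ hEX
  have : Nonempty (Fin d) := ⟨j'⟩
  let F : CylFrame (Euc d) := ⟨o, u, w, by simp [orthonormal_vecCons_iff, hun, hwn, huw]⟩
  have hPcl : IsClosed P := hP ▸ isClosed_biInter_halfSpace _ a c
  have hPconv : Convex ℝ P := hP ▸ convex_biInter_halfSpace _ a c
  have hKP : P ∩ {x | ⟪a i', x⟫ ≤ c i'} = K :=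
    hP ▸ hrep ▸ biInter_univ_erase_inter (fun i => {x | ⟪a i, x⟫ ≤ c i}) i'
  have hvK (i : Fin d) : v i ∈ K ∩ {x | ⟪a i', x⟫ = c i'} :=
    hfacet ▸ subset_convexHull ℝ _ (Set.mem_range_self i)
  have hF : F.hinge P 0 = K := by
    rw [← hKP] at hbody hKrange ⊢
    exact F.hinge_zero_eq_inter_halfSpace hvind (by simp) (ha i') hbody.2.2
      (fun i => (hvK i).2) (fun i => horient _ (hfacet ▸ hvK i)) fun x hx => (hKrange x hx).2
  have hslice : (interior P ∩ {x | F.angle x = 0}).Nonempty :=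
    F.exists_mem_interior_angle_eq_zero hPconv (hF ▸ hbody.2.2) (by rw [hF, hP]; exact hirr i')
      fun x hx => (hKrange x (hF ▸ hx)).1
  rw [← hF] at ho hbody hiso ⊢
  exact stmt5_general F hPcl hPconv ho.2.1 hbody.1.isBounded hiso hslice

end
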